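/- Strong duality theorem: Let X = ∏_{i=1}^n [aᵢ, bᵢ] ⊂ ℝⁿ be a compact box with 0 ≤ aᵢ < bᵢ for each i, and let μ be a finite signed Borel measure on X with μ(X) = 0 and Jordan decomposition μ = μ₊ − μ₋ (the properties enjoyed by the transformed measure of a probability density on X). Then sup_{u ∈ 𝒰(X) ∩ ℒ₁(X)} ∫_X u dμ = inf over finite nonnegative Borel measures γ on X × X with γ₁ − γ₂ ≽_cvx μ of ∫_{X×X} ‖x − y‖₁ dγ(x,y); both the supremum and the infimum are achieved; moreover the infimum is achieved by some γ* satisfying γ₁*(X) = γ₂*(X) = μ₊(X), γ₁* ≽_cvx μ₊, and γ₂* ≼_cvx μ₋. -/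

import Mathlib

open MeasureTheory Set

/-- ℓ¹ distance on `Fin n → ℝ`. -/
noncomputable def l1dist {n : ℕ} (x y : Fin n → ℝ) : ℝ := ∑ i, |x i - y i|

/-- The box `∏ i, [a i, b i]` in `ℝⁿ`. -/
def box {n : ℕ} (a b : Fin n → ℝ) : Set (Fin n → ℝ) := {x | ∀ i, x i ∈ Set.Icc (a i) (b i)}

/-- `u ∈ 𝒰(X)`: continuous, coordinatewise nondecreasing and convex on `X`. -/
def memU {n : ℕ} (X : Set (Fin n → ℝ)) (u : (Fin n → ℝ) → ℝ) : Prop :=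
  ContinuousOn u X ∧ (∀ x ∈ X, ∀ y ∈ X, (∀ i, x i ≤ y i) → u x ≤ u y) ∧ ConvexOn ℝ X u

/-- `u ∈ ℒ₁(X)`: 1-Lipschitz with respect to the ℓ¹ norm on `X`. -/
def memL1 {n : ℕ} (X : Set (Fin n → ℝ)) (u : (Fin n → ℝ) → ℝ) : Prop :=
  ∀ x ∈ X, ∀ y ∈ X, u x - u y ≤ l1dist x y


open CompactlySupported

/-- A convex set of continuous functions on a compact space that contains `0` and no strictly
negative function is nonnegative on average for some probability measure. -/
theorem exists_isProbabilityMeasure_forall_integral_nonneg {Y : Type*} [TopologicalSpace Y]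
    [CompactSpace Y] [T2Space Y] [MeasurableSpace Y] [BorelSpace Y] {B : Set C(Y, ℝ)}
    (hconv : Convex ℝ B) (hzero : 0 ∈ B) (hneg : ∀ f ∈ B, ∃ y, 0 ≤ f y) :
    ∃ ν : Measure Y, IsProbabilityMeasure ν ∧ ∀ f ∈ B, 0 ≤ ∫ y, f y ∂ν := by
  have hopen : IsOpen {f : C(Y, ℝ) | ∀ y, f y < 0} := by
    simpa [MapsTo] using ContinuousMap.isOpen_setOfPred_mapsTo (X := Y) isCompact_univ
      (isOpen_Iio (a := (0 : ℝ)))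
  have hconvA : Convex ℝ {f : C(Y, ℝ) | ∀ y, f y < 0} := by
    intro f hf g hg s t hs ht hst y
    exact (convex_Iio (0 : ℝ)) (hf y) (hg y) hs ht hst
  have hdisj : Disjoint {f : C(Y, ℝ) | ∀ y, f y < 0} B := by
    rw [Set.disjoint_left]
    intro f hf hfB
    obtain ⟨y, hy⟩ := hneg f hfB
    exact absurd (hf y) (not_lt.mpr hy)
  obtain ⟨Λ, s, hA, hB⟩ := geometric_hahn_banach_open hconvA hopen hconv hdisj
  have hs0 : s ≤ 0 := by simpa using hB 0 hzero
  have hone : 0 < Λ 1 := by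
    have := (hA (-1) (fun y => by simp)).trans_le hs0
    rw [map_neg] at this
    linarith
  have hs : 0 ≤ s := by
    by_contra! h
    have := hA ((s / Λ 1) • 1) (fun y => by simpa using div_neg_of_neg_of_pos h hone)
    rw [map_smul, smul_eq_mul, div_mul_cancel₀ _ hone.ne'] at this
    exact lt_irrefl _ this
  have hpos : ∀ f : C(Y, ℝ), (∀ y, 0 ≤ f y) → 0 ≤ Λ f := by
    intro f hf
    by_contra! h
    have := hA ((Λ f / Λ 1) • 1 - f) (fun y => by
      have := div_neg_of_neg_of_pos h hone
      have := hf y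
      simp; linarith)
    rw [map_sub, map_smul, smul_eq_mul, div_mul_cancel₀ _ hone.ne'] at this
    linarith
  let L : C_c(Y, ℝ) →ₗ[ℝ] ℝ :=
    { toFun := fun f => (Λ 1)⁻¹ * Λ f.toContinuousMap
      map_add' := fun f g => by
        have : (f + g).toContinuousMap = f.toContinuousMap + g.toContinuousMap := rfl
        rw [this, map_add, mul_add]
      map_smul' := fun c f => by
        have : (c • f).toContinuousMap = c • f.toContinuousMap := rfl
        rw [this, map_smul]
        simp only [smul_eq_mul, RingHom.id_apply]
        ring }
  let L' : C_c(Y, ℝ) →ₚ[ℝ] ℝ := PositiveLinearMap.mk₀ L (fun f hf =>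
    mul_nonneg (inv_nonneg.mpr hone.le) (hpos _ hf))
  have hint : ∀ f : C(Y, ℝ), ∫ y, f y ∂(RealRMK.rieszMeasure L') = (Λ 1)⁻¹ * Λ f := fun f =>
    RealRMK.integral_rieszMeasure L' (CompactlySupportedContinuousMap.continuousMapEquiv f)
  refine ⟨RealRMK.rieszMeasure L', ⟨?_⟩, fun f hf => ?_⟩
  · have h1 := hint 1
    rw [inv_mul_cancel₀ hone.ne'] at h1
    simp only [ContinuousMap.one_apply, integral_const, smul_eq_mul, mul_one, Measure.real] at h1
    exact (ENNReal.toReal_eq_one_iff _).mp h1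
  · rw [hint]
    exact mul_nonneg (inv_nonneg.mpr hone.le) (hs.trans (hB f hf))

theorem l1dist_nonneg {n : ℕ} (x y : Fin n → ℝ) : 0 ≤ l1dist x y :=
  Finset.sum_nonneg fun _ _ => abs_nonneg _

theorem l1dist_self {n : ℕ} (x : Fin n → ℝ) : l1dist x x = 0 := by simp [l1dist]

theorem l1dist_comm {n : ℕ} (x y : Fin n → ℝ) : l1dist x y = l1dist y x := by
  simp [l1dist, abs_sub_comm]

theorem l1dist_triangle {n : ℕ} (x y z : Fin n → ℝ) :
    l1dist x z ≤ l1dist x y + l1dist y z := by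
  simp only [l1dist, ← Finset.sum_add_distrib]
  exact Finset.sum_le_sum fun i _ => abs_sub_le _ _ _

theorem continuous_l1dist {n : ℕ} :
    Continuous fun p : (Fin n → ℝ) × (Fin n → ℝ) => l1dist p.1 p.2 := by
  unfold l1dist
  fun_prop

theorem l1dist_le_mul_dist {n : ℕ} (x y : Fin n → ℝ) : l1dist x y ≤ n * dist x y := by
  calc l1dist x y ≤ ∑ _i : Fin n, dist x y :=
        Finset.sum_le_sum fun i _ => by rw [← Real.dist_eq]; exact dist_le_pi_dist x y i
    _ = n * dist x y := by simp

theorem l1dist_convex_combination_le {n : ℕ} {x y x' y' : Fin n → ℝ} {s t : ℝ} (hs : 0 ≤ s)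
    (ht : 0 ≤ t) :
    l1dist (s • x + t • x') (s • y + t • y') ≤ s * l1dist x y + t * l1dist x' y' := by
  simp only [l1dist, Finset.mul_sum, ← Finset.sum_add_distrib]
  refine Finset.sum_le_sum fun i _ => ?_
  calc |(s • x + t • x') i - (s • y + t • y') i|
      = |s * (x i - y i) + t * (x' i - y' i)| := by
        simp only [Pi.add_apply, Pi.smul_apply, smul_eq_mul]; congr 1; ring
    _ ≤ |s * (x i - y i)| + |t * (x' i - y' i)| := abs_add_le _ _
    _ = _ := by rw [abs_mul, abs_mul, abs_of_nonneg hs, abs_of_nonneg ht]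

theorem box_eq_Icc {n : ℕ} (a b : Fin n → ℝ) : box a b = Set.Icc a b := by
  ext x
  simp [box, Pi.le_def, forall_and]

theorem isCompact_box {n : ℕ} (a b : Fin n → ℝ) : IsCompact (box a b) := by
  rw [box_eq_Icc]; exact isCompact_Icc

theorem convex_box {n : ℕ} (a b : Fin n → ℝ) : Convex ℝ (box a b) := by
  rw [box_eq_Icc]; exact convex_Icc a b

theorem measurableSet_box {n : ℕ} (a b : Fin n → ℝ) : MeasurableSet (box a b) :=
  (isCompact_box a b).measurableSet

theorem memU_const {n : ℕ} {X : Set (Fin n → ℝ)} (hX : Convex ℝ X) (c : ℝ) :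
    memU X fun _ => c :=
  ⟨continuousOn_const, fun _ _ _ _ _ => le_rfl, convexOn_const c hX⟩

theorem memU.add {n : ℕ} {X : Set (Fin n → ℝ)} {u v : (Fin n → ℝ) → ℝ} (hu : memU X u)
    (hv : memU X v) : memU X fun x => u x + v x :=
  ⟨hu.1.add hv.1, fun x hx y hy h => add_le_add (hu.2.1 x hx y hy h) (hv.2.1 x hx y hy h),
    hu.2.2.add hv.2.2⟩

theorem memU.const_mul {n : ℕ} {X : Set (Fin n → ℝ)} {u : (Fin n → ℝ) → ℝ} (hu : memU X u)
    {c : ℝ} (hc : 0 ≤ c) : memU X fun x => c * u x :=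
  ⟨hu.1.const_mul c, fun x hx y hy h => mul_le_mul_of_nonneg_left (hu.2.1 x hx y hy h) hc,
    hu.2.2.smul hc⟩

/-- A function that is Lipschitz for the ℓ¹ distance on `X` is continuous on `X`. -/
theorem continuousOn_of_sub_le_mul_l1dist {n : ℕ} {X : Set (Fin n → ℝ)} {u : (Fin n → ℝ) → ℝ}
    {c : ℝ} (hc : 0 ≤ c) (hu : ∀ x ∈ X, ∀ y ∈ X, u x - u y ≤ c * l1dist x y) :
    ContinuousOn u X := by
  refine (LipschitzOnWith.of_dist_le_mul (K := NNReal.mk (c * n) (by positivity))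
    fun x hx y hy => ?_).continuousOn
  have h1 := hu x hx y hy
  have h2 := hu y hy x hx
  rw [l1dist_comm] at h2
  have h3 := mul_le_mul_of_nonneg_left (l1dist_le_mul_dist x y) hc
  rw [Real.dist_eq, NNReal.coe_mk, mul_assoc, abs_le]
  constructor <;> linarith

/-- The infimal convolution of `w` with the multiple `c` of the ℓ¹ norm: it is the largest
function below `w` that is `c`-Lipschitz, and it stays nondecreasing and convex. -/
theorem exists_infimal_convolution {n : ℕ} {a b : Fin n → ℝ} (hne : (box a b).Nonempty)
    {w : (Fin n → ℝ) → ℝ} (hw : memU (box a b) w) {c : ℝ} (hc : 0 ≤ c) :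
    ∃ u : (Fin n → ℝ) → ℝ, memU (box a b) u ∧
      (∀ x ∈ box a b, ∀ y ∈ box a b, u x - u y ≤ c * l1dist x y) ∧
      (∀ x ∈ box a b, u x ≤ w x) ∧
      ∀ x, ∃ y ∈ box a b, u x = w y + c * l1dist x y := by
  have hmin : ∀ x, ∃ y ∈ box a b, ∀ z ∈ box a b, w y + c * l1dist x y ≤ w z + c * l1dist x z := by
    intro x
    obtain ⟨y, hy, h⟩ := (isCompact_box a b).exists_isMinOn
      (f := fun y => w y + c * l1dist x y) hne
      (hw.1.add ((continuous_l1dist.comp (by fun_prop : Continuous fun y => (x, y))).const_mul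
        c).continuousOn)
    exact ⟨y, hy, fun z hz => h hz⟩
  choose g hg hgmin using hmin
  have hlip : ∀ x ∈ box a b, ∀ y ∈ box a b, (w (g x) + c * l1dist x (g x)) -
      (w (g y) + c * l1dist y (g y)) ≤ c * l1dist x y := by
    intro x _ y _
    have h1 := hgmin x (g y) (hg y)
    have h2 := mul_le_mul_of_nonneg_left (l1dist_triangle x y (g y)) hc
    linarith
  refine ⟨fun x => w (g x) + c * l1dist x (g x),
    ⟨continuousOn_of_sub_le_mul_l1dist hc hlip, ?_, convex_box a b, ?_⟩, hlip, ?_,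
    fun x => ⟨g x, hg x, rfl⟩⟩
  · intro x hx y hy hxy
    have hmem : x ⊓ g y ∈ box a b := fun i =>
      ⟨le_inf (hx i).1 (hg y i).1, inf_le_left.trans (hx i).2⟩
    refine (hgmin x _ hmem).trans (add_le_add ?_ (mul_le_mul_of_nonneg_left ?_ hc))
    · exact hw.2.1 _ hmem _ (hg y) fun i => inf_le_right
    · refine Finset.sum_le_sum fun i _ => ?_
      have := hxy i
      rw [Pi.inf_apply]
      rcases le_total (x i) (g y i) with h | h
      · rw [inf_eq_left.mpr h]; simp
      · rw [inf_eq_right.mpr h, abs_of_nonneg (by linarith), abs_of_nonneg (by linarith)]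
        linarith
  · intro x _ y _ s t hs ht hst
    refine (hgmin _ _ (convex_box a b (hg x) (hg y) hs ht hst)).trans ?_
    have h1 := hw.2.2.2 (hg x) (hg y) hs ht hst
    have h2 := mul_le_mul_of_nonneg_left
      (l1dist_convex_combination_le (x := x) (y := g x) (x' := y) (y' := g y) hs ht) hc
    simp only [smul_eq_mul] at h1 ⊢
    linarith
  · intro x hx
    simpa [l1dist_self] using hgmin x x hx

theorem measure_restrict_box_eq_self {n : ℕ} {a b : Fin n → ℝ} {μ : Measure (Fin n → ℝ)}
    (hμ : μ (box a b)ᶜ = 0) : μ.restrict (box a b) = μ :=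
  Measure.restrict_eq_self_of_ae_mem (mem_ae_iff.mpr hμ)

theorem memU.integrable {n : ℕ} {a b : Fin n → ℝ} {μ : Measure (Fin n → ℝ)} [IsFiniteMeasure μ]
    (hμ : μ (box a b)ᶜ = 0) {u : (Fin n → ℝ) → ℝ} (hu : memU (box a b) u) : Integrable u μ := by
  rw [← measure_restrict_box_eq_self hμ]
  exact hu.1.integrableOn_compact (isCompact_box a b)

theorem integral_mono_box {n : ℕ} {a b : Fin n → ℝ} {μ : Measure (Fin n → ℝ)} [IsFiniteMeasure μ]
    (hμ : μ (box a b)ᶜ = 0) {u v : (Fin n → ℝ) → ℝ} (hu : memU (box a b) u)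
    (hv : memU (box a b) v) (h : ∀ x ∈ box a b, u x ≤ v x) : ∫ x, u x ∂μ ≤ ∫ x, v x ∂μ := by
  refine integral_mono_ae (hu.integrable hμ) (hv.integrable hμ) ?_
  filter_upwards [mem_ae_iff.mpr hμ] with x hx using h x hx

theorem BoundedContinuousFunction.continuous_integral {α : Type*} [TopologicalSpace α]
    [MeasurableSpace α] [BorelSpace α] (μ : Measure α) [IsFiniteMeasure μ] :
    Continuous fun f : BoundedContinuousFunction α ℝ => ∫ x, f x ∂μ := by
  have h := (MeasureTheory.continuous_integral (μ := μ) (G := ℝ)).comp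
    (BoundedContinuousFunction.toLp (E := ℝ) 1 μ ℝ).continuous
  refine h.congr fun f => ?_
  exact integral_congr_ae (BoundedContinuousFunction.coeFn_toLp 1 μ ℝ f)

theorem l1dist_le_of_mem_box {n : ℕ} {a b x y : Fin n → ℝ} (hx : x ∈ box a b)
    (hy : y ∈ box a b) : l1dist x y ≤ l1dist b a := by
  refine Finset.sum_le_sum fun i _ => ?_
  obtain ⟨h1, h2⟩ := hx i
  obtain ⟨h3, h4⟩ := hy i
  rw [abs_of_nonneg (by linarith : 0 ≤ b i - a i), abs_le]
  constructor <;> linarith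

/-- The functions in `𝒰(X) ∩ ℒ₁(X)` vanishing at the point `o`, as functions on `X`. -/
def normalizedFeasible {n : ℕ} (X : Set (Fin n → ℝ)) (o : X) :
    Set (BoundedContinuousFunction X ℝ) :=
  {f | f o = 0 ∧ (∀ x y : X, f x - f y ≤ l1dist x.1 y.1) ∧
    (∀ x y : X, (∀ i, x.1 i ≤ y.1 i) → f x ≤ f y) ∧
    ∀ x y z : X, ∀ s t : ℝ, 0 ≤ s → 0 ≤ t → s + t = 1 → z.1 = s • x.1 + t • y.1 →
      f z ≤ s * f x + t * f y}

theorem isClosed_normalizedFeasible {n : ℕ} (X : Set (Fin n → ℝ)) (o : X) :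
    IsClosed (normalizedFeasible X o) := by
  have hev : ∀ x : X, Continuous fun f : BoundedContinuousFunction X ℝ => f x := fun x =>
    continuous_eval_const x
  unfold normalizedFeasible
  simp only [Set.ofPred_and, Set.ofPred_forall]
  refine (isClosed_eq (hev o) continuous_const).inter (IsClosed.inter ?_ (IsClosed.inter ?_ ?_))
  · exact isClosed_iInter fun x => isClosed_iInter fun y =>
      isClosed_le ((hev x).sub (hev y)) continuous_const
  · exact isClosed_iInter fun x => isClosed_iInter fun y => isClosed_iInter fun _ =>
      isClosed_le (hev x) (hev y)
  · exact isClosed_iInter fun x => isClosed_iInter fun y => isClosed_iInter fun z =>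
      isClosed_iInter fun s => isClosed_iInter fun t => isClosed_iInter fun _ =>
      isClosed_iInter fun _ => isClosed_iInter fun _ => isClosed_iInter fun _ =>
      isClosed_le (hev z) (((hev x).const_mul s).add ((hev y).const_mul t))

theorem isCompact_normalizedFeasible {n : ℕ} (a b : Fin n → ℝ) (o : box a b) :
    IsCompact (normalizedFeasible (box a b) o) := by
  have : CompactSpace (box a b) := isCompact_iff_compactSpace.mp (isCompact_box a b)
  refine BoundedContinuousFunction.arzela_ascoli₂ (Set.Icc (-l1dist b a) (l1dist b a))
    isCompact_Icc _
    (isClosed_normalizedFeasible _ o) ?_ ?_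
  · rintro f x ⟨h0, hlip, -⟩
    have h1 := hlip x o
    have h2 := hlip o x
    have h3 := l1dist_le_of_mem_box x.2 o.2
    rw [l1dist_comm] at h2
    constructor <;> linarith
  · refine Metric.equicontinuous_of_continuity_modulus (fun r => n * r) ?_ _ ?_
    · have hcont : Continuous fun r : ℝ => (n : ℝ) * r := by fun_prop
      simpa using hcont.tendsto 0
    · rintro x y ⟨f, -, hlip, -⟩
      have h1 := hlip x y
      have h2 := hlip y x
      have h3 := l1dist_le_mul_dist x.1 y.1
      rw [l1dist_comm] at h2
      rw [Real.dist_eq, abs_le, Subtype.dist_eq]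
      constructor <;> simp only <;> linarith

theorem integral_eq_integral_comap_box {n : ℕ} {a b : Fin n → ℝ} {μ : Measure (Fin n → ℝ)}
    (hμ : μ (box a b)ᶜ = 0) (u : (Fin n → ℝ) → ℝ) :
    ∫ x, u x ∂μ = ∫ x : box a b, u x ∂(μ.comap Subtype.val) := by
  rw [integral_subtype_comap (measurableSet_box a b), measure_restrict_box_eq_self hμ]

/-- The primal problem has a maximizer. -/
theorem exists_primal_maximizer {n : ℕ} {a b : Fin n → ℝ} (hne : (box a b).Nonempty)
    {μp μn : Measure (Fin n → ℝ)} [IsFiniteMeasure μp] [IsFiniteMeasure μn]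
    (hμp : μp (box a b)ᶜ = 0) (hμn : μn (box a b)ᶜ = 0) (hmass : μp Set.univ = μn Set.univ) :
    ∃ u, memU (box a b) u ∧ memL1 (box a b) u ∧ ∀ v, memU (box a b) v → memL1 (box a b) v →
      (∫ x, v x ∂μp) - (∫ x, v x ∂μn) ≤ (∫ x, u x ∂μp) - (∫ x, u x ∂μn) := by
  have : CompactSpace (box a b) := isCompact_iff_compactSpace.mp (isCompact_box a b)
  obtain ⟨o, ho⟩ := hne
  obtain ⟨f, ⟨-, hlip, hmono, hconv⟩, hmax⟩ :=
    (isCompact_normalizedFeasible a b ⟨o, ho⟩).exists_isMaxOn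
    (f := fun f => (∫ x, f x ∂(μp.comap Subtype.val)) - ∫ x, f x ∂(μn.comap Subtype.val))
    ⟨0, by simp [normalizedFeasible, l1dist_nonneg]⟩
    ((BoundedContinuousFunction.continuous_integral _).sub
      (BoundedContinuousFunction.continuous_integral _)).continuousOn
  let u : (Fin n → ℝ) → ℝ := Function.extend Subtype.val f 0
  have hu : ∀ x : box a b, u x = f x := fun x => Subtype.val_injective.extend_apply f 0 x
  have hlip' : memL1 (box a b) u := fun x hx y hy => by
    have := hlip ⟨x, hx⟩ ⟨y, hy⟩
    rwa [← hu, ← hu] at this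
  refine ⟨u, ⟨?_, ?_, convex_box a b, ?_⟩, hlip', ?_⟩
  · exact continuousOn_of_sub_le_mul_l1dist (c := 1) zero_le_one
      fun x hx y hy => by rw [one_mul]; exact hlip' x hx y hy
  · intro x hx y hy hxy
    have := hmono ⟨x, hx⟩ ⟨y, hy⟩ hxy
    rwa [← hu, ← hu] at this
  · intro x hx y hy s t hs ht hst
    have := hconv ⟨x, hx⟩ ⟨y, hy⟩ ⟨_, convex_box a b hx hy hs ht hst⟩ s t hs ht hst rfl
    rwa [← hu, ← hu, ← hu] at this
  · intro v hv hvlip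
    let g : BoundedContinuousFunction (box a b) ℝ := BoundedContinuousFunction.mkOfCompact
      ⟨fun x => v x + -v o, (continuousOn_iff_continuous_domRestrict.mp hv.1).add continuous_const⟩
    have hgx : ∀ x, g x = v x + -v o := fun _ => rfl
    have hg : g ∈ normalizedFeasible (box a b) ⟨o, ho⟩ := by
      refine ⟨by simp [hgx], fun x y => ?_, fun x y hxy => ?_, fun x y z s t hs ht hst hz => ?_⟩
      · simpa [hgx] using hvlip x x.2 y y.2
      · simpa [hgx] using hv.2.1 x x.2 y y.2 hxy
      · have := hv.2.2.2 x.2 y.2 hs ht hst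
        rw [← hz] at this
        simp only [smul_eq_mul] at this
        have hvo : v o = s * v o + t * v o := by rw [← add_mul, hst, one_mul]
        simp only [hgx]
        linarith
    have hshift : ∀ (μ : Measure (Fin n → ℝ)) [IsFiniteMeasure μ], μ (box a b)ᶜ = 0 →
        ∫ x, g x ∂(μ.comap Subtype.val) = ∫ x, v x ∂μ + μ.real Set.univ * -v o := by
      intro μ _ hμ
      have := integral_add (hv.integrable hμ) (integrable_const (μ := μ) (-v o))
      rw [integral_const, smul_eq_mul, integral_eq_integral_comap_box hμ] at this
      exact this
    have := hmax hg
    simp only [Set.mem_ofPred_eq] at this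
    rw [hshift μp hμp, hshift μn hμn, Measure.real, Measure.real, hmass] at this
    rw [integral_eq_integral_comap_box hμp u, integral_eq_integral_comap_box hμn u]
    simp only [hu]
    linarith

theorem map_fst_compl_eq_zero {α : Type*} [MeasurableSpace α] {X : Set α}
    (hX : MeasurableSet X) {γ : Measure (α × α)} (hγ : γ (X ×ˢ X)ᶜ = 0) :
    γ.map Prod.fst Xᶜ = 0 := by
  rw [Measure.map_apply measurable_fst hX.compl]
  have hsub : Prod.fst ⁻¹' Xᶜ ⊆ (X ×ˢ X)ᶜ := fun p hp h => hp h.1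
  exact measure_mono_null hsub hγ

theorem map_snd_compl_eq_zero {α : Type*} [MeasurableSpace α] {X : Set α}
    (hX : MeasurableSet X) {γ : Measure (α × α)} (hγ : γ (X ×ˢ X)ᶜ = 0) :
    γ.map Prod.snd Xᶜ = 0 := by
  rw [Measure.map_apply measurable_snd hX.compl]
  have hsub : Prod.snd ⁻¹' Xᶜ ⊆ (X ×ˢ X)ᶜ := fun p hp h => hp h.2
  exact measure_mono_null hsub hγ

section Coupling

variable {n : ℕ} {a b : Fin n → ℝ} {γ : Measure ((Fin n → ℝ) × (Fin n → ℝ))} [IsFiniteMeasure γ]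
  {v : (Fin n → ℝ) → ℝ}

theorem memU.integrable_fst (hγ : γ (box a b ×ˢ box a b)ᶜ = 0) (hv : memU (box a b) v) :
    Integrable (fun p => v p.1) γ :=
  (hv.integrable (map_fst_compl_eq_zero (measurableSet_box a b) hγ)).comp_measurable
    measurable_fst

theorem memU.integrable_snd (hγ : γ (box a b ×ˢ box a b)ᶜ = 0) (hv : memU (box a b) v) :
    Integrable (fun p => v p.2) γ :=
  (hv.integrable (map_snd_compl_eq_zero (measurableSet_box a b) hγ)).comp_measurable
    measurable_snd

theorem memU.integral_map_fst (hγ : γ (box a b ×ˢ box a b)ᶜ = 0) (hv : memU (box a b) v) :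
    ∫ x, v x ∂(γ.map Prod.fst) = ∫ p, v p.1 ∂γ :=
  integral_map measurable_fst.aemeasurable
    (hv.integrable (map_fst_compl_eq_zero (measurableSet_box a b) hγ)).aestronglyMeasurable

theorem memU.integral_map_snd (hγ : γ (box a b ×ˢ box a b)ᶜ = 0) (hv : memU (box a b) v) :
    ∫ x, v x ∂(γ.map Prod.snd) = ∫ p, v p.2 ∂γ :=
  integral_map measurable_snd.aemeasurable
    (hv.integrable (map_snd_compl_eq_zero (measurableSet_box a b) hγ)).aestronglyMeasurable

theorem integrable_l1dist (hγ : γ (box a b ×ˢ box a b)ᶜ = 0) :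
    Integrable (fun p => l1dist p.1 p.2) γ := by
  rw [← Measure.restrict_eq_self_of_ae_mem (mem_ae_iff.mpr hγ)]
  exact continuous_l1dist.continuousOn.integrableOn_compact
    ((isCompact_box a b).prod (isCompact_box a b))

/-- Weak duality. -/
theorem integral_map_sub_le_integral_l1dist (hγ : γ (box a b ×ˢ box a b)ᶜ = 0)
    (hv : memU (box a b) v) (hlip : memL1 (box a b) v) :
    (∫ x, v x ∂(γ.map Prod.fst)) - (∫ x, v x ∂(γ.map Prod.snd)) ≤
      ∫ p, l1dist p.1 p.2 ∂γ := by
  rw [hv.integral_map_fst hγ, hv.integral_map_snd hγ,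
    ← integral_sub (hv.integrable_fst hγ) (hv.integrable_snd hγ)]
  refine integral_mono_ae ((hv.integrable_fst hγ).sub (hv.integrable_snd hγ))
    (integrable_l1dist hγ) ?_
  filter_upwards [mem_ae_iff.mpr hγ] with p hp using hlip _ hp.1 _ hp.2

end Coupling

section Dual

variable {n : ℕ} {a b : Fin n → ℝ} {μp μn : Measure (Fin n → ℝ)} [IsFiniteMeasure μp]
  [IsFiniteMeasure μn] {S : ℝ}

/-- An upper bound for the primal problem scales to `c`-Lipschitz functions. -/
theorem integral_sub_le_mul_of_lipschitz (hne : (box a b).Nonempty)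
    (hμp : μp (box a b)ᶜ = 0) (hμn : μn (box a b)ᶜ = 0) (hmass : μp Set.univ = μn Set.univ)
    (hS : ∀ u, memU (box a b) u → memL1 (box a b) u → (∫ x, u x ∂μp) - (∫ x, u x ∂μn) ≤ S)
    {u : (Fin n → ℝ) → ℝ} (hu : memU (box a b) u) {c : ℝ} (hc : 0 ≤ c)
    (hlip : ∀ x ∈ box a b, ∀ y ∈ box a b, u x - u y ≤ c * l1dist x y) :
    (∫ x, u x ∂μp) - (∫ x, u x ∂μn) ≤ c * S := by
  rcases hc.eq_or_lt with rfl | hc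
  · obtain ⟨o, ho⟩ := hne
    have hconst := memU_const (convex_box a b) (u o)
    have h1 := integral_mono_box hμp hu hconst
      fun x hx => by linarith [hlip x hx o ho]
    have h2 := integral_mono_box hμn hconst hu
      fun x hx => by linarith [hlip o ho x hx]
    rw [integral_const, Measure.real] at h1 h2
    rw [hmass] at h1
    linarith
  · have h := hS _ (hu.const_mul (inv_nonneg.mpr hc.le)) fun x hx y hy => by
      rw [← mul_sub, inv_mul_le_iff₀ hc]
      exact hlip x hx y hy
    rwa [integral_const_mul, integral_const_mul, ← mul_sub, inv_mul_le_iff₀ hc] at h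

theorem exists_nonneg_constraint (hne : (box a b).Nonempty)
    (hμp : μp (box a b)ᶜ = 0) (hμn : μn (box a b)ᶜ = 0) (hmass : μp Set.univ = μn Set.univ)
    (hS : ∀ u, memU (box a b) u → memL1 (box a b) u → (∫ x, u x ∂μp) - (∫ x, u x ∂μn) ≤ S)
    {v w : (Fin n → ℝ) → ℝ} (hv : memU (box a b) v) (hw : memU (box a b) w) {c : ℝ}
    (hc : 0 ≤ c) :
    ∃ x ∈ box a b, ∃ y ∈ box a b, 0 ≤ μp.real Set.univ * (v x - w y - c * l1dist x y) -
      ((∫ x, v x ∂μp) - (∫ x, w x ∂μn) - c * S) := by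
  obtain ⟨p, hp, hmax⟩ := ((isCompact_box a b).prod (isCompact_box a b)).exists_isMaxOn
    (f := fun p => v p.1 - w p.2 - c * l1dist p.1 p.2) (hne.prod hne)
    (((hv.1.comp continuousOn_fst fun _ h => h.1).sub
      (hw.1.comp continuousOn_snd fun _ h => h.2)).sub
      (continuous_l1dist.const_mul c).continuousOn)
  refine ⟨p.1, hp.1, p.2, hp.2, ?_⟩
  obtain ⟨u, hu, hlip, huw, hatt⟩ := exists_infimal_convolution hne hw hc
  set m := v p.1 - w p.2 - c * l1dist p.1 p.2 with hm
  have hvu : ∀ x ∈ box a b, v x + -m ≤ u x := by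
    intro x hx
    obtain ⟨y, hy, hxy⟩ := hatt x
    have : v x - w y - c * l1dist x y ≤ m := hmax (mk_mem_prod hx hy)
    linarith
  have h1 := integral_mono_box hμp (hv.add (memU_const (convex_box a b) (-m))) hu hvu
  rw [integral_add (hv.integrable hμp) (integrable_const _), integral_const, smul_eq_mul] at h1
  have h2 := integral_mono_box hμn hu hw huw
  have h3 := integral_sub_le_mul_of_lipschitz hne hμp hμn hmass hS hu hc hlip
  linarith

/-- Functions on `X × X` whose integral against a coupling must be nonnegative. -/
def dualConstraints (a b : Fin n → ℝ) (μp μn : Measure (Fin n → ℝ)) (S : ℝ) :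
    Set C(box a b × box a b, ℝ) :=
  {f | ∃ v w : (Fin n → ℝ) → ℝ, memU (box a b) v ∧ memU (box a b) w ∧ ∃ c : ℝ, 0 ≤ c ∧
    ∀ p, f p = μp.real Set.univ * (v p.1 - w p.2 - c * l1dist p.1.1 p.2.1) -
      ((∫ x, v x ∂μp) - (∫ x, w x ∂μn) - c * S)}

theorem convex_dualConstraints (hμp : μp (box a b)ᶜ = 0) (hμn : μn (box a b)ᶜ = 0) :
    Convex ℝ (dualConstraints a b μp μn S) := by
  rintro f ⟨v, w, hv, hw, c, hc, hf⟩ g ⟨v', w', hv', hw', c', hc', hg⟩ s t hs ht -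
  refine ⟨fun x => s * v x + t * v' x, fun x => s * w x + t * w' x,
    (hv.const_mul hs).add (hv'.const_mul ht), (hw.const_mul hs).add (hw'.const_mul ht),
    s * c + t * c', by positivity, fun p => ?_⟩
  rw [integral_add ((hv.integrable hμp).const_mul s) ((hv'.integrable hμp).const_mul t),
    integral_add ((hw.integrable hμn).const_mul s) ((hw'.integrable hμn).const_mul t)]
  simp only [integral_const_mul, ContinuousMap.add_apply, ContinuousMap.smul_apply, smul_eq_mul,
    hf, hg]
  ring

/-- Every upper bound `S` of the primal problem bounds the cost of a dual feasible coupling. -/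
theorem exists_dual_coupling (hne : (box a b).Nonempty)
    (hμp : μp (box a b)ᶜ = 0) (hμn : μn (box a b)ᶜ = 0) (hmass : μp Set.univ = μn Set.univ)
    (hS : ∀ u, memU (box a b) u → memL1 (box a b) u → (∫ x, u x ∂μp) - (∫ x, u x ∂μn) ≤ S) :
    ∃ γ : Measure ((Fin n → ℝ) × (Fin n → ℝ)), IsFiniteMeasure γ ∧
      γ (box a b ×ˢ box a b)ᶜ = 0 ∧ γ Set.univ = μp Set.univ ∧
      (∀ v, memU (box a b) v → (∫ x, v x ∂μp) ≤ ∫ x, v x ∂(γ.map Prod.fst)) ∧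
      (∀ v, memU (box a b) v → (∫ x, v x ∂(γ.map Prod.snd)) ≤ ∫ x, v x ∂μn) ∧
      ∫ p, l1dist p.1 p.2 ∂γ ≤ S := by
  have : CompactSpace (box a b) := isCompact_iff_compactSpace.mp (isCompact_box a b)
  have hzero := memU_const (convex_box a b) 0
  obtain ⟨ν, _, hν⟩ := exists_isProbabilityMeasure_forall_integral_nonneg
    (convex_dualConstraints (S := S) hμp hμn)
    ⟨fun _ => 0, fun _ => 0, hzero, hzero, 0, le_rfl, fun p => by simp⟩
    (by
      rintro f ⟨v, w, hv, hw, c, hc, hf⟩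
      obtain ⟨x, hx, y, hy, h⟩ := exists_nonneg_constraint hne hμp hμn hmass hS hv hw hc
      exact ⟨(⟨x, hx⟩, ⟨y, hy⟩), by rw [hf]; exact h⟩)
  have hemb : MeasurableEmbedding
      (Prod.map Subtype.val Subtype.val : box a b × box a b → _) :=
    (MeasurableEmbedding.subtype_coe (measurableSet_box a b)).prodMap
      (MeasurableEmbedding.subtype_coe (measurableSet_box a b))
  let γ : Measure ((Fin n → ℝ) × (Fin n → ℝ)) :=
    μp Set.univ • ν.map (Prod.map Subtype.val Subtype.val)
  have hγint : ∀ f : (Fin n → ℝ) × (Fin n → ℝ) → ℝ,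
      ∫ p, f p ∂γ = μp.real Set.univ * ∫ p, f (p.1.1, p.2.1) ∂ν := by
    intro f
    rw [integral_smul_measure, hemb.integral_map]
    rfl
  have hγfin : IsFiniteMeasure γ := Measure.smul_finite _ (measure_ne_top _ _)
  have hγ : γ (box a b ×ˢ box a b)ᶜ = 0 := by
    have : ν.map (Prod.map Subtype.val Subtype.val) (box a b ×ˢ box a b)ᶜ = 0 := by
      rw [hemb.map_apply]
      convert measure_empty (μ := ν)
      ext p
      simp
    simp [γ, this]
  have hkey : ∀ v w : (Fin n → ℝ) → ℝ, memU (box a b) v → memU (box a b) w → ∀ c : ℝ, 0 ≤ c →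
      0 ≤ (∫ x, v x ∂(γ.map Prod.fst)) - (∫ x, w x ∂(γ.map Prod.snd)) -
        c * (∫ p, l1dist p.1 p.2 ∂γ) - ((∫ x, v x ∂μp) - (∫ x, w x ∂μn) - c * S) := by
    intro v w hv hw c hc
    have hv' := continuousOn_iff_continuous_domRestrict.mp hv.1
    have hw' := continuousOn_iff_continuous_domRestrict.mp hw.1
    have hcont : Continuous fun p : box a b × box a b =>
        v p.1 - w p.2 - c * l1dist p.1.1 p.2.1 :=
      ((hv'.comp continuous_fst).sub (hw'.comp continuous_snd)).sub
        ((continuous_l1dist.comp (by fun_prop :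
          Continuous fun p : box a b × box a b => (p.1.1, p.2.1))).const_mul c)
    have h := hν ⟨fun p => μp.real Set.univ * (v p.1 - w p.2 - c * l1dist p.1.1 p.2.1) -
      ((∫ x, v x ∂μp) - (∫ x, w x ∂μn) - c * S), (hcont.const_mul _).sub continuous_const⟩
      ⟨v, w, hv, hw, c, hc, fun p => rfl⟩
    simp only [ContinuousMap.coe_mk] at h
    rw [integral_sub ((hcont.integrable_of_hasCompactSupport
        (HasCompactSupport.of_compactSpace _)).const_mul _) (integrable_const _),
      integral_const_mul, integral_const, probReal_univ (μ := ν), one_smul,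
      ← hγint fun p => v p.1 - w p.2 - c * l1dist p.1 p.2,
      integral_sub (f := fun p => v p.1 - w p.2) ((hv.integrable_fst hγ).sub (hw.integrable_snd hγ))
        ((integrable_l1dist hγ).const_mul c),
      integral_sub (hv.integrable_fst hγ) (hw.integrable_snd hγ), integral_const_mul] at h
    rwa [hv.integral_map_fst hγ, hw.integral_map_snd hγ]
  refine ⟨γ, hγfin, hγ, ?_, fun v hv => ?_, fun w hw => ?_, ?_⟩
  · simp [γ, hemb.map_apply]
  · have := hkey v (fun _ => 0) hv hzero 0 le_rfl
    simp only [integral_zero] at this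
    linarith
  · have := hkey (fun _ => 0) w hzero hw 0 le_rfl
    simp only [integral_zero] at this
    linarith
  · have := hkey (fun _ => 0) (fun _ => 0) hzero hzero 1 zero_le_one
    simp only [integral_zero] at this
    linarith

end Dual

/-- **Strong duality theorem.** For the box `X` and a finite signed Borel measure `μ` on `X`
with `μ(X) = 0` and Jordan decomposition `μ = μp − μn`:
`sup_{u ∈ 𝒰(X) ∩ ℒ₁(X)} ∫ u dμ = inf_{γ : γ₁ − γ₂ ≽_cvx μ} ∫ ‖x − y‖₁ dγ`;
both the supremum and the infimum are achieved; moreover the infimum is achieved by some `γ*`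
with `γ₁*(X) = γ₂*(X) = μ₊(X)`, `γ₁* ≽_cvx μ₊` and `γ₂* ≼_cvx μ₋`. -/
theorem strong_duality {n : ℕ} (a b : Fin n → ℝ) (hab : ∀ i, 0 ≤ a i ∧ a i < b i)
    (μp μn : Measure (Fin n → ℝ)) [IsFiniteMeasure μp] [IsFiniteMeasure μn]
    (hμp : μp (box a b)ᶜ = 0) (hμn : μn (box a b)ᶜ = 0) (hjordan : μp.MutuallySingular μn)
    (hzero : μp Set.univ = μn Set.univ) :
    let X : Set (Fin n → ℝ) := box a b
    let P : Set ℝ := {r | ∃ u : (Fin n → ℝ) → ℝ, memU X u ∧ memL1 X u ∧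
        r = (∫ x, u x ∂μp) - (∫ x, u x ∂μn)}
    let D : Set ℝ := {r | ∃ γ : Measure ((Fin n → ℝ) × (Fin n → ℝ)), IsFiniteMeasure γ ∧
        γ ((X ×ˢ X)ᶜ) = 0 ∧
        (∀ v : (Fin n → ℝ) → ℝ, memU X v →
          (∫ x, v x ∂μp) - (∫ x, v x ∂μn) ≤
            (∫ x, v x ∂(γ.map Prod.fst)) - (∫ x, v x ∂(γ.map Prod.snd))) ∧
        r = ∫ p, l1dist p.1 p.2 ∂γ}
    sSup P = sInf D ∧ sSup P ∈ P ∧ sInf D ∈ D ∧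
      ∃ γ : Measure ((Fin n → ℝ) × (Fin n → ℝ)), IsFiniteMeasure γ ∧
        γ ((X ×ˢ X)ᶜ) = 0 ∧
        (∀ v : (Fin n → ℝ) → ℝ, memU X v →
          (∫ x, v x ∂μp) - (∫ x, v x ∂μn) ≤
            (∫ x, v x ∂(γ.map Prod.fst)) - (∫ x, v x ∂(γ.map Prod.snd))) ∧
        (∫ p, l1dist p.1 p.2 ∂γ) = sInf D ∧
        γ.map Prod.fst Set.univ = μp Set.univ ∧
        γ.map Prod.snd Set.univ = μp Set.univ ∧
        (∀ v : (Fin n → ℝ) → ℝ, memU X v → (∫ x, v x ∂μp) ≤ ∫ x, v x ∂(γ.map Prod.fst)) ∧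
        (∀ v : (Fin n → ℝ) → ℝ, memU X v → (∫ x, v x ∂(γ.map Prod.snd)) ≤ ∫ x, v x ∂μn) := by
  intro X P D
  have hne : (box a b).Nonempty := ⟨a, fun i => ⟨le_rfl, (hab i).2.le⟩⟩
  obtain ⟨u, hu, hlip, hmax⟩ := exists_primal_maximizer hne hμp hμn hzero
  obtain ⟨γ, hfin, hγ, hmass, hfst, hsnd, hcost⟩ := exists_dual_coupling hne hμp hμn hzero hmax
  have hfeas : ∀ v, memU X v → (∫ x, v x ∂μp) - (∫ x, v x ∂μn) ≤
      (∫ x, v x ∂(γ.map Prod.fst)) - (∫ x, v x ∂(γ.map Prod.snd)) := fun v hv =>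
    sub_le_sub (hfst v hv) (hsnd v hv)
  have hP : IsGreatest P ((∫ x, u x ∂μp) - ∫ x, u x ∂μn) := by
    refine ⟨⟨u, hu, hlip, rfl⟩, ?_⟩
    rintro r ⟨v, hv, hvlip, rfl⟩
    exact hmax v hv hvlip
  have hcost_eq : ∫ p, l1dist p.1 p.2 ∂γ = (∫ x, u x ∂μp) - ∫ x, u x ∂μn :=
    le_antisymm hcost
      ((hfeas u hu).trans (integral_map_sub_le_integral_l1dist hγ hu hlip))
  have hD : IsLeast D ((∫ x, u x ∂μp) - ∫ x, u x ∂μn) := by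
    refine ⟨⟨γ, hfin, hγ, hfeas, hcost_eq.symm⟩, ?_⟩
    rintro r ⟨γ', _, hγ', hfeas', rfl⟩
    exact (hfeas' u hu).trans (integral_map_sub_le_integral_l1dist hγ' hu hlip)
  rw [hP.csSup_eq, hD.csInf_eq]
  refine ⟨rfl, hP.1, hD.1, γ, hfin, hγ, hfeas, hcost_eq, ?_, ?_, hfst, hsnd⟩
  · rw [Measure.map_apply measurable_fst MeasurableSet.univ, preimage_univ, hmass]
  · rw [Measure.map_apply measurable_snd MeasurableSet.univ, preimage_univ, hmass]
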